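/- arXiv:1802.08353 — 2 statements merged into one kernel-verified Lean document; each statement's English description precedes it below -/
import Mathlib

section
/- Let I and J be *-homogeneous ideals of D and let K be a *-homogeneous ideal with K ⊆ M(I) ∩ M(J). Then M(I) = M(J) = M(K). Consequently, if M(I) ≠ M(J), then M(I) ∩ M(J) contains no *-homogeneous ideal. -/
open scoped nonZeroDivisors

/-- A star operation on the nonzero fractional ideals of an integral domain `D`
with quotient field `K`: it fixes nonzero principal fractional ideals, commutes with
multiplication by nonzero principal fractional ideals, is extensive, monotone and
idempotent (on nonzero fractional ideals). -/
structure StarOperation (D K : Type*) [CommRing D] [IsDomain D] [Field K]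
    [Algebra D K] [IsFractionRing D K] where
  star : FractionalIdeal D⁰ K → FractionalIdeal D⁰ K
  star_spanSingleton : ∀ x : K, x ≠ 0 →
    star (FractionalIdeal.spanSingleton D⁰ x) = FractionalIdeal.spanSingleton D⁰ x
  star_smul : ∀ (x : K) (I : FractionalIdeal D⁰ K), x ≠ 0 → I ≠ 0 →
    star (FractionalIdeal.spanSingleton D⁰ x * I) = FractionalIdeal.spanSingleton D⁰ x * star I
  le_star : ∀ I : FractionalIdeal D⁰ K, I ≠ 0 → I ≤ star I
  star_mono : ∀ I J : FractionalIdeal D⁰ K, I ≠ 0 → J ≠ 0 → I ≤ J → star I ≤ star J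
  star_idem : ∀ I : FractionalIdeal D⁰ K, I ≠ 0 → star (star I) = star I

namespace StarOperation

variable {D K : Type*} [CommRing D] [IsDomain D] [Field K] [Algebra D K] [IsFractionRing D K]
variable (s : StarOperation D K)

/-- `*` has finite character: for every nonzero fractional ideal `I`, `I^*` is the union
of `J^*` over the nonzero finitely generated fractional subideals `J` of `I`. -/
def FiniteCharacter : Prop :=
  ∀ I : FractionalIdeal D⁰ K, I ≠ 0 → ∀ x ∈ s.star I,
    ∃ J : FractionalIdeal D⁰ K, J ≠ 0 ∧ (J : Submodule D K).FG ∧ J ≤ I ∧ x ∈ s.star J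

/-- A (nonzero) integral ideal `I` of `D` is a `*`-ideal if `I^* = I`. -/
def IsStarIdeal (I : Ideal D) : Prop :=
  I ≠ ⊥ ∧ s.star (I : FractionalIdeal D⁰ K) = (I : FractionalIdeal D⁰ K)

/-- An integral ideal `I` of `D` is a `*`-ideal of finite type if `I = J^*` for some
nonzero finitely generated ideal `J`. -/
def IsFiniteTypeStarIdeal (I : Ideal D) : Prop :=
  ∃ J : Ideal D, J ≠ ⊥ ∧ J.FG ∧
    s.star (J : FractionalIdeal D⁰ K) = (I : FractionalIdeal D⁰ K)

/-- A maximal `*`-ideal: maximal among proper integral `*`-ideals. -/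
def IsMaxStarIdeal (M : Ideal D) : Prop :=
  M ≠ ⊤ ∧ s.IsStarIdeal M ∧ ∀ J : Ideal D, J ≠ ⊤ → s.IsStarIdeal J → M ≤ J → J = M

/-- `I` is `*`-homogeneous: a proper `*`-ideal of finite type such that `(J + J')^* ≠ D`
for every pair `J`, `J'` of proper `*`-ideals of finite type containing `I`. -/
def IsHomog (I : Ideal D) : Prop :=
  I ≠ ⊤ ∧ s.IsStarIdeal I ∧ s.IsFiniteTypeStarIdeal I ∧
    ∀ J J' : Ideal D, J ≠ ⊤ → J' ≠ ⊤ → s.IsStarIdeal J → s.IsStarIdeal J' →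
      s.IsFiniteTypeStarIdeal J → s.IsFiniteTypeStarIdeal J' → I ≤ J → I ≤ J' →
      s.star ((J + J' : Ideal D) : FractionalIdeal D⁰ K) ≠ 1

/-- The set `M(I) = {x ∈ D : (xD + I)^* ≠ D}` attached to an ideal `I`. -/
def MSet (I : Ideal D) : Set D :=
  {x : D | s.star ((Ideal.span {x} + I : Ideal D) : FractionalIdeal D⁰ K) ≠ 1}

/-- `A` and `B` are `*`-comaximal if `(A + B)^* = D`. -/
def StarComaximal (A B : Ideal D) : Prop :=
  s.star ((A + B : Ideal D) : FractionalIdeal D⁰ K) = 1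

/-- An integral ideal `I` is `*`-invertible if `(I · I⁻¹)^* = D`. -/
def StarInvertible (I : Ideal D) : Prop :=
  s.star ((I : FractionalIdeal D⁰ K) * (I : FractionalIdeal D⁰ K)⁻¹) = 1

/-- `D` is a `*`-SH domain: every principal ideal generated by a nonzero nonunit is a
`*`-product of finitely many `*`-homogeneous ideals. -/
def IsSHDomain : Prop :=
  ∀ x : D, x ≠ 0 → ¬IsUnit x →
    ∃ T : Multiset (Ideal D), (∀ J ∈ T, s.IsHomog J) ∧
      s.star ((T.prod : Ideal D) : FractionalIdeal D⁰ K) =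
        ((Ideal.span {x} : Ideal D) : FractionalIdeal D⁰ K)

/-- `D` has finite `*`-character: every nonzero nonunit lies in only finitely many
maximal `*`-ideals. -/
def FiniteStarCharacter : Prop :=
  ∀ x : D, x ≠ 0 → ¬IsUnit x → {P : Ideal D | s.IsMaxStarIdeal P ∧ x ∈ P}.Finite

end StarOperation

namespace StarOperation

variable {D K : Type*} [CommRing D] [IsDomain D] [Field K] [Algebra D K] [IsFractionRing D K]
variable (s : StarOperation D K)

theorem aux_star_one : s.star 1 = 1 := by
  have h := s.star_spanSingleton 1 one_ne_zero
  simpa using h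

theorem aux_coe_ne {A : Ideal D} (hA : A ≠ ⊥) : (A : FractionalIdeal D⁰ K) ≠ 0 :=
  FractionalIdeal.coeIdeal_ne_zero.mpr hA

theorem aux_ne_bot {A B : Ideal D} (hA : A ≠ ⊥) (h : A ≤ B) : B ≠ ⊥ := by
  rintro rfl
  exact hA (le_bot_iff.mp h)

theorem aux_star_mono {A B : Ideal D} (hA : A ≠ ⊥) (h : A ≤ B) :
    s.star (A : FractionalIdeal D⁰ K) ≤ s.star (B : FractionalIdeal D⁰ K) :=
  s.star_mono _ _ (aux_coe_ne hA) (aux_coe_ne (aux_ne_bot hA h))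
    (FractionalIdeal.coeIdeal_le_coeIdeal K |>.mpr h)

theorem aux_star_le_one {A : Ideal D} (hA : A ≠ ⊥) :
    s.star (A : FractionalIdeal D⁰ K) ≤ 1 := by
  have h := s.star_mono (A : FractionalIdeal D⁰ K) 1 (aux_coe_ne hA) one_ne_zero
    FractionalIdeal.coeIdeal_le_one
  rwa [aux_star_one] at h

theorem aux_mono {A B : Ideal D} (hA : A ≠ ⊥) (h : A ≤ B)
    (hP : s.star (A : FractionalIdeal D⁰ K) = 1) : s.star (B : FractionalIdeal D⁰ K) = 1 :=
  le_antisymm (s.aux_star_le_one (aux_ne_bot hA h)) (hP ▸ s.aux_star_mono hA h)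

theorem aux_cl {A : Ideal D} (hA : A ≠ ⊥) :
    ∃ C : Ideal D, s.star (A : FractionalIdeal D⁰ K) = (C : FractionalIdeal D⁰ K) ∧
      A ≤ C ∧ s.IsStarIdeal C := by
  obtain ⟨C, hC⟩ := FractionalIdeal.le_one_iff_exists_coeIdeal.mp (s.aux_star_le_one hA)
  have hAC : A ≤ C := by
    rw [← FractionalIdeal.coeIdeal_le_coeIdeal K, hC]
    exact s.le_star _ (aux_coe_ne hA)
  refine ⟨C, hC.symm, hAC, aux_ne_bot hA hAC, ?_⟩
  rw [hC, s.star_idem _ (aux_coe_ne hA)]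

/-- the closure of `A + L0` contains `L = L0^*` -/
theorem aux_cl_add {A L L0 : Ideal D} (h0 : L0 ≠ ⊥)
    (hL : s.star (L0 : FractionalIdeal D⁰ K) = (L : FractionalIdeal D⁰ K)) :
    ∃ C : Ideal D, s.star ((A + L0 : Ideal D) : FractionalIdeal D⁰ K) =
      (C : FractionalIdeal D⁰ K) ∧ A + L ≤ C ∧ s.IsStarIdeal C := by
  have hne : A + L0 ≠ ⊥ := aux_ne_bot h0 le_sup_right
  obtain ⟨C, hC, hle, hst⟩ := s.aux_cl hne
  refine ⟨C, hC, sup_le (le_sup_left.trans hle) ?_, hst⟩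
  rw [← FractionalIdeal.coeIdeal_le_coeIdeal K, ← hL, ← hC]
  exact s.aux_star_mono h0 le_sup_right

theorem aux_red {A L L0 : Ideal D} (h0 : L0 ≠ ⊥) (hL0 : L ≠ ⊥)
    (hL : s.star (L0 : FractionalIdeal D⁰ K) = (L : FractionalIdeal D⁰ K))
    (hP : s.star ((A + L : Ideal D) : FractionalIdeal D⁰ K) = 1) :
    s.star ((A + L0 : Ideal D) : FractionalIdeal D⁰ K) = 1 := by
  obtain ⟨C, hC, hle, hst⟩ := s.aux_cl_add (A := A) h0 hL
  rw [hC, ← hst.2]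
  exact s.aux_mono (aux_ne_bot hL0 le_sup_right) hle hP

theorem aux_le {L L0 : Ideal D} (h0 : L0 ≠ ⊥)
    (hL : s.star (L0 : FractionalIdeal D⁰ K) = (L : FractionalIdeal D⁰ K)) : L0 ≤ L := by
  rw [← FractionalIdeal.coeIdeal_le_coeIdeal K, ← hL]
  exact s.le_star _ (aux_coe_ne h0)

theorem aux_key {I A B : Ideal D} (hI : s.IsHomog I) (hA : A.FG) (hB : B.FG)
    (hP : s.star ((A + B + I : Ideal D) : FractionalIdeal D⁰ K) = 1) :
    s.star ((A + I : Ideal D) : FractionalIdeal D⁰ K) = 1 ∨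
      s.star ((B + I : Ideal D) : FractionalIdeal D⁰ K) = 1 := by
  obtain ⟨-, hIs, ⟨I0, h0, hfg, hI0⟩, hh⟩ := hI
  have hle := s.aux_le h0 hI0
  obtain ⟨C, hC, hCle, hCs⟩ := s.aux_cl_add (A := A) h0 hI0
  obtain ⟨C', hC', hCle', hCs'⟩ := s.aux_cl_add (A := B) h0 hI0
  have neA : A + I0 ≠ ⊥ := aux_ne_bot h0 le_sup_right
  have neB : B + I0 ≠ ⊥ := aux_ne_bot h0 le_sup_right
  by_cases hCt : C = ⊤
  · left
    refine s.aux_mono neA (sup_le_sup_left hle A) ?_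
    rw [hC, hCt, FractionalIdeal.coeIdeal_top]
  by_cases hCt' : C' = ⊤
  · right
    refine s.aux_mono neB (sup_le_sup_left hle B) ?_
    rw [hC', hCt', FractionalIdeal.coeIdeal_top]
  exfalso
  refine hh C C' hCt hCt' hCs hCs' ⟨_, neA, Submodule.FG.sup hA hfg, hC⟩
    ⟨_, neB, Submodule.FG.sup hB hfg, hC'⟩ (le_sup_right.trans hCle)
    (le_sup_right.trans hCle') ?_
  refine s.aux_mono (aux_ne_bot hIs.1 le_sup_right) ?_ hP
  exact sup_le (sup_le_sup (le_sup_left.trans hCle) (le_sup_left.trans hCle'))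
    ((le_sup_right.trans hCle).trans le_sup_left)

theorem aux_fg {I : Ideal D} (hI : s.IsHomog I) (S : Finset D) :
    (S : Set D) ⊆ s.MSet I →
    s.star ((Ideal.span (S : Set D) + I : Ideal D) : FractionalIdeal D⁰ K) ≠ 1 := by
  classical
  induction S using Finset.induction_on with
  | empty =>
    intro _ h
    apply hI.1
    have h2 : (I : FractionalIdeal D⁰ K) = ((⊤ : Ideal D) : FractionalIdeal D⁰ K) := by
      rw [← hI.2.1.2, FractionalIdeal.coeIdeal_top]
      simpa using h
    exact FractionalIdeal.coeIdeal_injective h2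
  | insert a S ha ih =>
    intro hS h
    rw [Finset.coe_insert, Ideal.span_insert] at h
    rw [Finset.coe_insert, Set.insert_subset_iff] at hS
    rcases s.aux_key hI ⟨{a}, by simp [Ideal.span]⟩ ⟨S, rfl⟩ h with h | h
    · exact hS.1 h
    · exact ih hS.2 h

theorem aux_main {I L : Ideal D} (hI : s.IsHomog I) (hL : s.IsHomog L)
    (hLI : (L : Set D) ⊆ s.MSet I) : s.MSet I = s.MSet L := by
  obtain ⟨I0, i0, ifg, hI0⟩ := hI.2.2.1
  obtain ⟨L0, l0, lfg, hL0⟩ := hL.2.2.1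
  have hIne := hI.2.1.1
  have hLne := hL.2.1.1
  have hIle := s.aux_le i0 hI0
  have hLle := s.aux_le l0 hL0
  have hno : s.star ((L0 + I : Ideal D) : FractionalIdeal D⁰ K) ≠ 1 := by
    obtain ⟨S, hS⟩ := lfg
    have := s.aux_fg hI S (fun x hx => hLI (hLle (hS ▸ Ideal.subset_span hx)))
    rw [← hS]
    exact this
  ext x
  have hx : (Ideal.span {x} : Ideal D).FG := ⟨{x}, by simp [Ideal.span]⟩
  constructor
  · intro h hP
    have h1 := s.aux_red l0 hLne hL0 hP
    have h2 : s.star ((Ideal.span {x} + L0 + I : Ideal D) : FractionalIdeal D⁰ K) = 1 :=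
      s.aux_mono (aux_ne_bot l0 le_sup_right) le_sup_left h1
    rcases s.aux_key hI hx lfg h2 with h3 | h3
    · exact h h3
    · exact hno h3
  · intro h hP
    have h1 := s.aux_red i0 hIne hI0 hP
    have h2 : s.star ((Ideal.span {x} + I0 + L : Ideal D) : FractionalIdeal D⁰ K) = 1 :=
      s.aux_mono (aux_ne_bot i0 le_sup_right) le_sup_left h1
    rcases s.aux_key hL hx ifg h2 with h3 | h3
    · exact h h3
    · have h4 := s.aux_red l0 hLne hL0 h3
      refine hno (s.aux_mono (aux_ne_bot l0 le_sup_right) ?_ h4)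
      exact sup_le (hIle.trans le_sup_right) le_sup_left

end StarOperation

/-- If `I`, `J` are `*`-homogeneous and `L` is a `*`-homogeneous ideal with
`L ⊆ M(I) ∩ M(J)`, then `M(I) = M(J) = M(L)`. Consequently, if `M(I) ≠ M(J)` then
`M(I) ∩ M(J)` contains no `*`-homogeneous ideal. -/
theorem MSet_eq_of_homog_subset {D K : Type*} [CommRing D] [IsDomain D] [Field K]
    [Algebra D K] [IsFractionRing D K] (s : StarOperation D K) (hs : s.FiniteCharacter) :
    (∀ I J L : Ideal D, s.IsHomog I → s.IsHomog J → s.IsHomog L →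
      (L : Set D) ⊆ s.MSet I ∩ s.MSet J → s.MSet I = s.MSet J ∧ s.MSet J = s.MSet L) ∧
    (∀ I J : Ideal D, s.IsHomog I → s.IsHomog J → s.MSet I ≠ s.MSet J →
      ¬∃ L : Ideal D, s.IsHomog L ∧ (L : Set D) ⊆ s.MSet I ∩ s.MSet J) := by
  have main : ∀ I J L : Ideal D, s.IsHomog I → s.IsHomog J → s.IsHomog L →
      (L : Set D) ⊆ s.MSet I ∩ s.MSet J → s.MSet I = s.MSet J ∧ s.MSet J = s.MSet L := by
    intro I J L hI hJ hL h
    have h1 := s.aux_main hI hL (h.trans Set.inter_subset_left)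
    have h2 := s.aux_main hJ hL (h.trans Set.inter_subset_right)
    exact ⟨h1.trans h2.symm, h2⟩
  refine ⟨main, ?_⟩
  rintro I J hI hJ hne ⟨L, hL, h⟩
  exact hne (main I J L hI hJ hL h).1
end

section
/- Let I be a *-homogeneous ideal of D and let A, B be ideals of D that are *-comaximal, i.e., (A + B)* = D. Then: (i) if AB ⊆ I, then A ⊆ I or B ⊆ I; (ii) if moreover B is *-homogeneous, then (AB)*·D_{M(B)} ∩ D = B, where D_{M(B)} is the localization of D at the prime ideal M(B). -/
open scoped nonZeroDivisors

namespace StarOperation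

section helpers

variable {D K : Type*} [CommRing D] [IsDomain D] [Field K] [Algebra D K] [IsFractionRing D K]
variable (s : StarOperation D K)

/-- The star closure as an operation on integral ideals. -/
def cl (I : Ideal D) : Ideal D :=
  Submodule.comap (Algebra.linearMap D K)
    ((s.star (I : FractionalIdeal D⁰ K) : FractionalIdeal D⁰ K) : Submodule D K)

theorem mem_cl (I : Ideal D) (x : D) :
    x ∈ s.cl I ↔ algebraMap D K x ∈ s.star (I : FractionalIdeal D⁰ K) := Iff.rfl

theorem coe_ne {I : Ideal D} (h : I ≠ ⊥) : (I : FractionalIdeal D⁰ K) ≠ 0 :=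
  FractionalIdeal.coeIdeal_ne_zero.mpr h

theorem star_one : s.star (1 : FractionalIdeal D⁰ K) = 1 := by
  have := s.star_spanSingleton 1 one_ne_zero
  rwa [FractionalIdeal.spanSingleton_one] at this

theorem star_le_one {I : Ideal D} (h : I ≠ ⊥) : s.star (I : FractionalIdeal D⁰ K) ≤ 1 := by
  have := s.star_mono _ 1 (coe_ne h) one_ne_zero FractionalIdeal.coeIdeal_le_one
  rwa [star_one] at this

theorem coe_cl {I : Ideal D} (h : I ≠ ⊥) :
    ((s.cl I : Ideal D) : FractionalIdeal D⁰ K) = s.star (I : FractionalIdeal D⁰ K) := by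
  ext x
  rw [FractionalIdeal.mem_coeIdeal]
  constructor
  · rintro ⟨y, hy, rfl⟩
    exact hy
  · intro hx
    obtain ⟨y, rfl⟩ := (FractionalIdeal.mem_one_iff D⁰).mp (s.star_le_one h hx)
    exact ⟨y, hx, rfl⟩

theorem le_cl {I : Ideal D} (h : I ≠ ⊥) : I ≤ s.cl I := by
  intro x hx
  exact s.le_star _ (coe_ne h) (FractionalIdeal.mem_coeIdeal_of_mem D⁰ hx)

theorem cl_ne {I : Ideal D} (h : I ≠ ⊥) : s.cl I ≠ ⊥ := fun h' =>
  h (le_bot_iff.mp (h' ▸ s.le_cl h))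

theorem cl_mono {I J : Ideal D} (h : I ≠ ⊥) (hIJ : I ≤ J) : s.cl I ≤ s.cl J := by
  have hJ : J ≠ ⊥ := fun h' => h (le_bot_iff.mp (h' ▸ hIJ))
  intro x hx
  exact s.star_mono _ _ (coe_ne h) (coe_ne hJ)
    ((FractionalIdeal.coeIdeal_le_coeIdeal K).mpr hIJ) hx

theorem isStar_cl {I : Ideal D} (h : I ≠ ⊥) : s.IsStarIdeal (s.cl I) := by
  refine ⟨s.cl_ne h, ?_⟩
  rw [s.coe_cl h, s.star_idem _ (coe_ne h)]

theorem cl_eq {I : Ideal D} (h : s.IsStarIdeal I) : s.cl I = I := by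
  have := s.coe_cl h.1
  rw [h.2] at this
  exact FractionalIdeal.coeIdeal_injective this

theorem cl_le {I J : Ideal D} (h : I ≠ ⊥) (hJ : s.IsStarIdeal J) (hIJ : I ≤ J) :
    s.cl I ≤ J := (s.cl_mono h hIJ).trans (s.cl_eq hJ).le

theorem star_eq_one {I : Ideal D} (h : I ≠ ⊥) :
    s.star (I : FractionalIdeal D⁰ K) = 1 ↔ s.cl I = ⊤ := by
  rw [← s.coe_cl h, FractionalIdeal.coeIdeal_eq_one, Ideal.one_eq_top]

/-- If `I^* = D` and `x I ⊆ J` with `J` a star ideal then `x ∈ J`. -/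
theorem mem_of_mul {I J : Ideal D} (h : I ≠ ⊥) (hI : s.cl I = ⊤) (hJ : s.IsStarIdeal J)
    (x : D) (hx : ∀ y ∈ I, x * y ∈ J) : x ∈ J := by
  by_cases hx0 : x = 0
  · rw [hx0]; exact J.zero_mem
  have hx0' : algebraMap D K x ≠ 0 := by
    simpa using hx0
  have h1 := s.star_smul (algebraMap D K x) I hx0' (coe_ne h)
  rw [(s.star_eq_one h).mpr hI, mul_one, ← FractionalIdeal.coeIdeal_span_singleton,
    ← FractionalIdeal.coeIdeal_mul] at h1
  have hne : Ideal.span {x} * I ≠ ⊥ := by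
    rw [Ne, Ideal.mul_eq_bot]
    simp [hx0, h]
  have hle : Ideal.span {x} * I ≤ J := by
    rw [Ideal.span_singleton_mul_le_iff]
    exact hx
  rw [← s.coe_cl hne] at h1
  have h2 := FractionalIdeal.coeIdeal_injective h1
  have h3 := s.cl_le hne hJ hle
  rw [h2] at h3
  exact h3 (Ideal.mem_span_singleton_self x)

theorem exists_fg (hs : s.FiniteCharacter) {I : Ideal D} (h : I ≠ ⊥) (hI : s.cl I = ⊤) :
    ∃ J : Ideal D, J ≠ ⊥ ∧ J.FG ∧ J ≤ I ∧ s.cl J = ⊤ := by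
  have h1 : (1 : K) ∈ s.star (I : FractionalIdeal D⁰ K) := by
    rw [(s.star_eq_one h).mpr hI]
    exact FractionalIdeal.one_mem_one D⁰
  obtain ⟨J, hJ0, hfg, hle, hm⟩ := hs _ (coe_ne h) 1 h1
  obtain ⟨J', rfl⟩ := FractionalIdeal.le_one_iff_exists_coeIdeal.mp
    (hle.trans FractionalIdeal.coeIdeal_le_one)
  refine ⟨J', FractionalIdeal.coeIdeal_ne_zero.mp hJ0, ?_,
    (FractionalIdeal.coeIdeal_le_coeIdeal K).mp hle, ?_⟩
  · exact (FractionalIdeal.coeIdeal_fg D⁰ (IsFractionRing.injective D K) J').mp hfg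
  · rw [Ideal.eq_top_iff_one, mem_cl, map_one]
    exact hm

/-- Comaximality dichotomy for finitely generated ideals. -/
theorem homog_fg {I : Ideal D} (hI : s.IsHomog I) {A B : Ideal D} (hA : A.FG) (hB : B.FG)
    (hA' : s.cl (A + I) ≠ ⊤) (hB' : s.cl (B + I) ≠ ⊤) : s.cl ((A + B) + I) ≠ ⊤ := by
  obtain ⟨_, hst, ⟨I0, hI0, hI0fg, hI0s⟩, hh⟩ := hI
  have hI0I : s.cl I0 = I := FractionalIdeal.coeIdeal_injective (K := K)
    ((s.coe_cl hI0).trans hI0s)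
  have key : ∀ A : Ideal D, A + I ≠ ⊥ ∧ A + I0 ≠ ⊥ ∧ s.cl (A + I0) = s.cl (A + I) := by
    intro A
    have hle : I0 ≤ I := (s.le_cl hI0).trans hI0I.le
    have h1 : A + I0 ≠ ⊥ := fun h => hI0 (le_bot_iff.mp (h ▸ le_sup_right))
    have h2 : A + I ≠ ⊥ := fun h => hst.1 (le_bot_iff.mp (h ▸ le_sup_right))
    refine ⟨h2, h1, le_antisymm (s.cl_mono h1 (sup_le_sup le_rfl hle)) ?_⟩
    refine s.cl_le h2 (s.isStar_cl h1) (sup_le (le_sup_left.trans (s.le_cl h1)) ?_)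
    exact hI0I.symm.le.trans (s.cl_mono hI0 le_sup_right)
  have ft : ∀ A : Ideal D, A.FG → s.IsFiniteTypeStarIdeal (s.cl (A + I)) := by
    intro A hA
    refine ⟨A + I0, (key A).2.1, Submodule.FG.sup hA hI0fg, ?_⟩
    rw [← (key A).2.2, s.coe_cl (key A).2.1]
  have hle : ∀ A : Ideal D, A + I ≤ s.cl (A + I) := fun A => s.le_cl (key A).1
  have h3 := hh (s.cl (A + I)) (s.cl (B + I)) hA' hB' (s.isStar_cl (key A).1)
    (s.isStar_cl (key B).1) (ft A hA) (ft B hB) (le_sup_right.trans (hle A))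
    (le_sup_right.trans (hle B))
  have hsum : (A + B) + I ≤ s.cl (A + I) + s.cl (B + I) := by
    refine sup_le (sup_le ?_ ?_) ?_
    · exact (le_sup_left.trans (hle A)).trans le_sup_left
    · exact (le_sup_left.trans (hle B)).trans le_sup_right
    · exact (le_sup_right.trans (hle A)).trans le_sup_left
  intro htop
  apply h3
  rw [s.star_eq_one (fun h => (key (A + B)).1 (le_bot_iff.mp (h ▸ hsum)))]
  exact top_le_iff.mp (htop ▸ s.cl_mono (key (A + B)).1 hsum)

theorem add_homog_ne {I : Ideal D} (hI : s.IsHomog I) (A : Ideal D) : A + I ≠ ⊥ :=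
  fun h => hI.2.1.1 (le_bot_iff.mp (h ▸ le_sup_right))

theorem homog_pt {I : Ideal D} (hI : s.IsHomog I) (A : Ideal D) (hA : A.FG)
    (h : ∀ x ∈ A, s.cl (Ideal.span {x} + I) ≠ ⊤) : s.cl (A + I) ≠ ⊤ := by
  induction A, hA using Submodule.fg_induction with
  | singleton x => exact h x (Ideal.mem_span_singleton_self x)
  | sup A B hA hB ihA ihB =>
    exact s.homog_fg hI hA hB (ihA fun x hx => h x (Ideal.mem_sup_left hx))
      (ihB fun x hx => h x (Ideal.mem_sup_right hx))

/-- If `(A + I)^* = D` with `I` homogeneous, some element of `A` is outside `M(I)`. -/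
theorem exists_not_mem (hs : s.FiniteCharacter) {I : Ideal D} (hI : s.IsHomog I) (A : Ideal D)
    (h : s.cl (A + I) = ⊤) : ∃ x ∈ A, s.cl (Ideal.span {x} + I) = ⊤ := by
  by_contra! hc
  obtain ⟨J, hJ0, hJ, hJle, hJt⟩ := s.exists_fg hs (s.add_homog_ne hI A) h
  refine s.homog_pt hI J hJ ?_ (top_le_iff.mp (hJt ▸ s.cl_mono hJ0 le_sup_left))
  intro x hx ht
  obtain ⟨a, ha, i, hi, rfl⟩ := Submodule.mem_sup.mp (hJle hx)
  apply hc a ha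
  rw [← top_le_iff, ← ht]
  refine s.cl_mono (s.add_homog_ne hI _) (sup_le ?_ le_sup_right)
  rw [Ideal.span_singleton_le_iff_mem]
  exact Ideal.add_mem _ (Ideal.mem_sup_left (Ideal.mem_span_singleton_self a))
    (Ideal.mem_sup_right hi)

theorem homog_or (hs : s.FiniteCharacter) {I : Ideal D} (hI : s.IsHomog I) (A B : Ideal D)
    (h0 : A + B ≠ ⊥) (h : s.cl (A + B) = ⊤) : s.cl (A + I) = ⊤ ∨ s.cl (B + I) = ⊤ := by
  by_contra! hc
  obtain ⟨J, hJ0, hJ, hJle, hJt⟩ := s.exists_fg hs h0 h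
  refine s.homog_pt hI J hJ ?_ (top_le_iff.mp (hJt ▸ s.cl_mono hJ0 le_sup_left))
  intro x hx ht
  obtain ⟨a, ha, b, hb, rfl⟩ := Submodule.mem_sup.mp (hJle hx)
  have big : ∀ (C : Ideal D) (c : D), c ∈ C → s.cl (C + I) ≠ ⊤ →
      s.cl (Ideal.span {c} + I) ≠ ⊤ := by
    intro C c hcC hC h'
    apply hC
    rw [← top_le_iff, ← h']
    exact s.cl_mono (s.add_homog_ne hI _)
      (sup_le_sup ((Ideal.span_singleton_le_iff_mem C).mpr hcC) le_rfl)
  refine s.homog_fg hI (Submodule.fg_span_singleton a) (Submodule.fg_span_singleton b)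
    (big A a ha hc.1) (big B b hb hc.2) ?_
  rw [← top_le_iff, ← ht]
  refine s.cl_mono (s.add_homog_ne hI _) (sup_le_sup ?_ le_rfl)
  rw [Ideal.span_singleton_le_iff_mem]
  exact Ideal.add_mem _ (Ideal.mem_sup_left (Ideal.mem_span_singleton_self a))
    (Ideal.mem_sup_right (Ideal.mem_span_singleton_self b))

end helpers

end StarOperation

/-- Let `I` be `*`-homogeneous and `A`, `B` be `*`-comaximal ideals. Then:
(i) if `AB ⊆ I` then `A ⊆ I` or `B ⊆ I`; (ii) if moreover `B` is `*`-homogeneous and `M`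
is the (prime) maximal `*`-ideal `M(B)`, then `(AB)^* · D_M ∩ D = B`. -/
theorem homog_comaximal_parts {D K : Type*} [CommRing D] [IsDomain D] [Field K]
    [Algebra D K] [IsFractionRing D K] (s : StarOperation D K) (hs : s.FiniteCharacter)
    (I : Ideal D) (hI : s.IsHomog I) (A B : Ideal D) (hAB : s.StarComaximal A B) :
    (A * B ≤ I → A ≤ I ∨ B ≤ I) ∧
    (s.IsHomog B → ∀ (M : Ideal D) [M.IsPrime], (M : Set D) = s.MSet B →
      ∃ L : Ideal D,
        (L : FractionalIdeal D⁰ K) = s.star ((A * B : Ideal D) : FractionalIdeal D⁰ K) ∧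
        Ideal.comap (algebraMap D (Localization.AtPrime M))
          (Ideal.map (algebraMap D (Localization.AtPrime M)) L) = B) := by
  have part : ∀ A B : Ideal D, s.cl (A + I) = ⊤ → A * B ≤ I → B ≤ I := by
    intro A B h hle b hb
    refine s.mem_of_mul (s.add_homog_ne hI A) h hI.2.1 b ?_
    intro y hy
    obtain ⟨a, ha, i, hi, rfl⟩ := Submodule.mem_sup.mp hy
    rw [mul_add]
    refine I.add_mem ?_ (I.mul_mem_left b hi)
    rw [mul_comm]
    exact hle (Ideal.mul_mem_mul ha hb)
  constructor
  · intro hle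
    by_cases h0 : A + B = ⊥
    · exact Or.inl ((le_bot_iff.mp (h0 ▸ le_sup_left : A ≤ ⊥)).le.trans bot_le)
    have h1 : s.cl (A + B) = ⊤ := (s.star_eq_one h0).mp hAB
    rcases s.homog_or hs hI A B h0 h1 with h | h
    · exact Or.inr (part A B h hle)
    · exact Or.inl (part B A h (by rwa [mul_comm]))
  · intro hB M hMp hM
    have h1 : s.cl (A + B) = ⊤ := (s.star_eq_one (s.add_homog_ne hB A)).mp hAB
    have hMmem : ∀ x, x ∉ M → s.cl (Ideal.span {x} + B) = ⊤ := by
      intro x hx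
      rw [← SetLike.mem_coe, hM, StarOperation.MSet, Set.mem_setOf_eq, not_not,
        s.star_eq_one (s.add_homog_ne hB _)] at hx
      exact hx
    obtain ⟨a, haA, ha⟩ := s.exists_not_mem hs hB A h1
    have haM : a ∉ M := by
      rw [← SetLike.mem_coe, hM, StarOperation.MSet, Set.mem_setOf_eq, not_not,
        s.star_eq_one (s.add_homog_ne hB _)]
      exact ha
    have hA0 : A ≠ ⊥ := by
      rintro rfl
      rw [← Ideal.zero_eq_bot, zero_add, s.cl_eq hB.2.1] at h1
      exact hB.1 h1
    have hAB0 : A * B ≠ ⊥ := by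
      rw [Ne, Ideal.mul_eq_bot]
      exact fun h => h.elim hA0 hB.2.1.1
    refine ⟨s.cl (A * B), s.coe_cl hAB0, ?_⟩
    ext x
    rw [Ideal.mem_comap, IsLocalization.algebraMap_mem_map_algebraMap_iff M.primeCompl]
    constructor
    · rintro ⟨u, hu, hux⟩
      have huB : u * x ∈ B := s.cl_le hAB0 hB.2.1 Ideal.mul_le_right hux
      refine s.mem_of_mul (s.add_homog_ne hB _) (hMmem u hu) hB.2.1 x ?_
      intro y hy
      obtain ⟨c, hc, i, hi, rfl⟩ := Submodule.mem_sup.mp hy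
      obtain ⟨d, rfl⟩ := Ideal.mem_span_singleton'.mp hc
      rw [mul_add]
      refine B.add_mem ?_ (B.mul_mem_left x hi)
      have : x * (d * u) = d * (u * x) := by ring
      rw [this]
      exact B.mul_mem_left d huB
    · intro hx
      exact ⟨a, haM, s.le_cl hAB0 (Ideal.mul_mem_mul haA hx)⟩
end
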